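/- Let (H,(V_h)_{h ∈ V(H)}) be a graph-decomposition of a graph G, and let r ∈ ℕ. Define V'_h := B_G(V_h, r) for every h ∈ V(H). Then (H,(V'_h)_{h ∈ V(H)}) is again a graph-decomposition of G. -/

import Mathlib

/-!
A node `h` has `v` in its enlarged bag exactly when `B h` meets the ball of radius `r` around `v`.
This ball induces a connected subgraph of `G`, and in a graph-decomposition the nodes whose bags
meet a connected vertex set induce a connected subgraph of the model graph: they are the union of
the connected sets `{h | u ∈ B h}`, two of which overlap whenever their vertices are adjacent.
-/

open SimpleGraph

namespace RadialPaper

variable {V W N : Type*}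

/-- The ball of radius `r` around a set `U` of vertices of `G`. -/
def ballSet (G : SimpleGraph V) (U : Set V) (r : ℕ) : Set V :=
  {v | ∃ u ∈ U, G.edist u v ≤ (r : ℕ∞)}

/-- `G` has radius at most `r`: some vertex has distance at most `r` from every vertex.
The empty graph has radius `0`; a nonempty disconnected graph has radius `∞`, hence
satisfies `radiusLE` for no `r`. -/
def radiusLE (G : SimpleGraph V) (r : ℕ) : Prop :=
  Nonempty V → ∃ v : V, ∀ w : V, G.edist v w ≤ (r : ℕ∞)

/-- `(Hg, B)` is a graph-decomposition of `G` modelled on `Hg`. -/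
def IsGraphDecomp (G : SimpleGraph V) (Hg : SimpleGraph N) (B : N → Set V) : Prop :=
  (∀ v : V, ∃ h : N, v ∈ B h) ∧
  (∀ ⦃u v : V⦄, G.Adj u v → ∃ h : N, u ∈ B h ∧ v ∈ B h) ∧
  (∀ v : V, (Hg.induce {h : N | v ∈ B h}).Connected)

/-- A subgraph `X` of `G` is `c`-quasi-geodesic. -/
def IsQuasiGeodesic (G : SimpleGraph V) (X : G.Subgraph) (c : ℕ) : Prop :=
  ∀ u v : X.verts, X.coe.edist u v ≤ (c : ℕ∞) * G.edist (u : V) (v : V)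

/-- The subgraph `Y` of `G` is a `(≥ k)`-subdivision of the graph `X`. -/
def IsSubdivGE (k : ℕ) (X : SimpleGraph W) {G : SimpleGraph V} (Y : G.Subgraph) : Prop :=
  ∃ (f : W → V) (p : ∀ ⦃u v : W⦄, X.Adj u v → G.Walk (f u) (f v)),
    Function.Injective f ∧
    (∀ ⦃u v : W⦄ (h : X.Adj u v), (p h).IsPath) ∧
    (∀ ⦃u v : W⦄ (h : X.Adj u v), k + 1 ≤ (p h).length) ∧
    (∀ ⦃u v : W⦄ (h : X.Adj u v), p h.symm = (p h).reverse) ∧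
    (∀ ⦃u v : W⦄ (h : X.Adj u v) (w : W), f w ∈ (p h).support → w = u ∨ w = v) ∧
    (∀ ⦃u v u' v' : W⦄ (h : X.Adj u v) (h' : X.Adj u' v'), s(u, v) ≠ s(u', v') →
      ∀ x : V, x ∈ (p h).support → x ∈ (p h').support →
        (x = f u ∨ x = f v) ∧ (x = f u' ∨ x = f v')) ∧
    Y.verts = Set.range f ∪ {x : V | ∃ (u v : W) (h : X.Adj u v), x ∈ (p h).support} ∧
    Y.edgeSet = {e : Sym2 V | ∃ (u v : W) (h : X.Adj u v), e ∈ (p h).edges}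

/-- `G` contains a `(≥ k)`-subdivision of `X` as a `c`-quasi-geodesic subgraph. -/
def ContainsQuasiGeodesicSubdivGE (G : SimpleGraph V) (k : ℕ) (X : SimpleGraph W) (c : ℕ) :
    Prop :=
  ∃ Y : G.Subgraph, IsSubdivGE k X Y ∧ IsQuasiGeodesic G Y c

/-- `X` is a minor of `Hg`. -/
def IsMinorOf (X : SimpleGraph W) (Hg : SimpleGraph N) : Prop :=
  ∃ B : W → Set N, (∀ w, (B w).Nonempty) ∧ (∀ w, (Hg.induce (B w)).Connected) ∧
    (∀ ⦃w w' : W⦄, w ≠ w' → Disjoint (B w) (B w')) ∧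
    (∀ ⦃w w' : W⦄, X.Adj w w' → ∃ a ∈ B w, ∃ b ∈ B w', Hg.Adj a b)

/-- A class of (finite) graphs, given on the canonical vertex sets `Fin n`, is minor-closed. -/
def MinorClosed (ℋ : ∀ n : ℕ, SimpleGraph (Fin n) → Prop) : Prop :=
  ∀ ⦃m n : ℕ⦄ (X : SimpleGraph (Fin m)) (Hg : SimpleGraph (Fin n)),
    ℋ n Hg → IsMinorOf X Hg → ℋ m X

/-- The triangle `K³`. -/
def triangleGraph : SimpleGraph (Fin 3) := ⊤

/-- The claw `K_{1,3}`, with centre `0`. -/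
def clawGraph : SimpleGraph (Fin 4) := SimpleGraph.fromRel (fun a _ => a = 0)

/-- The wrench graph: two adjacent vertices `0, 1` of degree three, with leaves `2,3` and
`4,5` respectively. -/
def wrenchGraph : SimpleGraph (Fin 6) :=
  SimpleGraph.fromRel (fun a b =>
    (a = 0 ∧ b = 1) ∨ (a = 0 ∧ b = 2) ∨ (a = 0 ∧ b = 3) ∨ (a = 1 ∧ b = 4) ∨ (a = 1 ∧ b = 5))

/-- The star `K_{1,m}`, with centre `none`. -/
def starGraph (m : ℕ) : SimpleGraph (Option (Fin m)) :=
  SimpleGraph.fromRel (fun a _ => a = none)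

/-- `Hg` is a disjoint union of paths: every connected component is a path. -/
def IsUnionOfPaths (Hg : SimpleGraph N) : Prop :=
  ∀ cc : Hg.ConnectedComponent, ∃ m : ℕ,
    Nonempty (Hg.induce cc.supp ≃g SimpleGraph.pathGraph m)

/-- `Hg` is a disjoint union of cycles: every connected component is a cycle. -/
def IsUnionOfCycles (Hg : SimpleGraph N) : Prop :=
  ∀ cc : Hg.ConnectedComponent, ∃ m : ℕ, 3 ≤ m ∧
    Nonempty (Hg.induce cc.supp ≃g SimpleGraph.cycleGraph m)

/-- `Hg` is a subdivided star, i.e. a `(≥ 0)`-subdivision of some star `K_{1,m}`. -/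
def IsSubdividedStar (Hg : SimpleGraph N) : Prop :=
  ∃ m : ℕ, IsSubdivGE 0 (starGraph m) (⊤ : Hg.Subgraph)

/-- `Hg` is a disjoint union of subdivided stars. -/
def IsUnionOfSubdividedStars (Hg : SimpleGraph N) : Prop :=
  ∀ cc : Hg.ConnectedComponent, IsSubdividedStar (Hg.induce cc.supp)

/-- A graph-decomposition is honest: bags of adjacent nodes intersect. -/
def Honest (Hg : SimpleGraph N) (B : N → Set V) : Prop :=
  ∀ ⦃h h' : N⦄, Hg.Adj h h' → (B h ∩ B h').Nonempty

/-- The outer-radial width of a decomposition of `G` is at most `r`. -/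
def OuterRadialWidthLE (G : SimpleGraph V) (B : N → Set V) (r : ℕ) : Prop :=
  ∀ h : N, ∃ z : V, ∀ v ∈ B h, G.edist z v ≤ (r : ℕ∞)

/-- The radial spread of a decomposition `(Hg, B)` of a graph with vertex set `V`
is at most `r`. -/
def RadialSpreadLE (Hg : SimpleGraph N) (B : N → Set V) (r : ℕ) : Prop :=
  ∀ v : V, radiusLE (Hg.induce {h : N | v ∈ B h}) r

/-- `φ` is an `(m, a, M, A, r)`-quasi-isometry from `Hg` to `G`. -/
def IsQuasiIsometry (Hg : SimpleGraph N) (G : SimpleGraph V) (m a M A r : ℕ)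
    (φ : N → V) : Prop :=
  (∀ h h' : N, Hg.edist h h' ≤ (m : ℕ∞) * G.edist (φ h) (φ h') + (a : ℕ∞)) ∧
  (∀ h h' : N, G.edist (φ h) (φ h') ≤ (M : ℕ∞) * Hg.edist h h' + (A : ℕ∞)) ∧
  (∀ v : V, ∃ h : N, G.edist v (φ h) ≤ (r : ℕ∞))

/-- `C` is a connected component of `G - S`: a maximal connected set of vertices
disjoint from `S`. -/
def IsCompOf (G : SimpleGraph V) (C S : Set V) : Prop :=
  C.Nonempty ∧ Disjoint C S ∧ (G.induce C).Connected ∧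
  ∀ D : Set V, C ⊆ D → Disjoint D S → (G.induce D).Connected → D = C

/-- The subgraph `P` of `G` is an `M₀`–`M₁` path meeting `C`. -/
def IsM01Path (G : SimpleGraph V) (M₀ M₁ C : Set V) (P : G.Subgraph) : Prop :=
  ∃ (x y : V) (q : G.Walk x y), q.IsPath ∧ q.toSubgraph = P ∧ x ∈ M₀ ∧ y ∈ M₁ ∧
    (∀ z ∈ q.support, z ≠ x → z ≠ y → z ∉ M₀ ∪ M₁) ∧ ∃ z ∈ q.support, z ∈ C

/-- The number of `M₀`–`M₁` paths meeting `C` that are contained in the subgraph `OS`. -/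
noncomputable def Wcount (G : SimpleGraph V) (M₀ M₁ C : Set V) (OS : G.Subgraph) : ℕ :=
  Set.ncard {P : G.Subgraph | P ≤ OS ∧ IsM01Path G M₀ M₁ C P}

section

variable {G : SimpleGraph V} {Hg : SimpleGraph N}

theorem preconnected_induce_iUnion {S : V → Set N} (hG : G.Preconnected)
    (hS : ∀ v, (Hg.induce (S v)).Preconnected)
    (hadj : ∀ ⦃u v⦄, G.Adj u v → (S u ∩ S v).Nonempty) :
    (Hg.induce (⋃ v, S v)).Preconnected := by
  have reachable_within (v : V) {a b : N} (ha : a ∈ S v) (hb : b ∈ S v) :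
      (Hg.induce (⋃ v, S v)).Reachable
        ⟨a, Set.mem_iUnion_of_mem v ha⟩ ⟨b, Set.mem_iUnion_of_mem v hb⟩ :=
    (hS v ⟨a, ha⟩ ⟨b, hb⟩).map (Hg.induceHomOfLE (Set.subset_iUnion S v)).toHom
  rintro ⟨a, ha⟩ ⟨b, hb⟩
  obtain ⟨u, hau⟩ := Set.mem_iUnion.1 ha
  obtain ⟨v, hbv⟩ := Set.mem_iUnion.1 hb
  obtain ⟨p⟩ := hG u v
  induction p generalizing a with
  | nil => exact reachable_within _ hau hbv
  | cons huw _ ih =>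
    obtain ⟨c, hcu, hcw⟩ := hadj huw
    exact (reachable_within _ hau hcu).trans (ih c _ hcw hbv)

theorem connected_induce_ball (v : V) {r : ℕ∞} (hr : 0 < r) :
    (G.induce (G.ball v r)).Connected := by
  classical
  refine induce_connected_of_patches v (mem_ball_self hr) fun {w} hw => ?_
  obtain ⟨p, hp⟩ := exists_walk_of_edist_ne_top (ne_top_of_lt (mem_ball.1 hw))
  have support_subset : {x | x ∈ p.support} ⊆ G.ball v r := fun x hx =>
    calc G.edist x v
      _ ≤ (p.dropUntil x hx).length := (p.dropUntil x hx).edist_le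
      _ ≤ p.length := mod_cast p.length_dropUntil_le_length hx
      _ < r := hp ▸ hw
  exact ⟨_, support_subset, p.end_mem_support, p.start_mem_support,
    p.connected_induce_support.preconnected _ _⟩

theorem subset_ballSet (U : Set V) (r : ℕ) : U ⊆ ballSet G U r :=
  fun v hv => ⟨v, hv, by simp⟩

-- `SimpleGraph.ball` is the open ball, whence the radius `r + 1`.
theorem mem_ballSet_iff_inter_ball_nonempty {U : Set V} {r : ℕ} {v : V} :
    v ∈ ballSet G U r ↔ (U ∩ G.ball v (r + 1)).Nonempty := by
  simp only [ballSet, Set.mem_ofPred_eq, Set.Nonempty, Set.mem_inter_iff, mem_ball,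
    ENat.lt_natCast_add_one_iff]

theorem IsGraphDecomp.connected_induce_setOf_inter_nonempty {B : N → Set V}
    (hdec : IsGraphDecomp G Hg B) {U : Set V} (hU : (G.induce U).Connected) :
    (Hg.induce {h | (B h ∩ U).Nonempty}).Connected := by
  obtain ⟨exists_bag, exists_bag_of_adj, connected_nodes⟩ := hdec
  have nodes_eq : {h | (B h ∩ U).Nonempty} = ⋃ u : U, {h | (u : V) ∈ B h} := by
    ext h
    simp [Set.Nonempty, and_comm]
  obtain ⟨u⟩ := hU.nonempty
  obtain ⟨h, hu⟩ := exists_bag u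
  have : Nonempty {h | (B h ∩ U).Nonempty} := ⟨h, u, hu, u.2⟩
  refine ⟨?_⟩
  rw [nodes_eq]
  exact preconnected_induce_iUnion hU.preconnected (fun u => (connected_nodes u).preconnected)
    fun _ _ huv => exists_bag_of_adj huv

theorem decomposition_of_balls_around_bags_general {B : N → Set V}
    (hdec : IsGraphDecomp G Hg B) (r : ℕ) :
    IsGraphDecomp G Hg (fun h => ballSet G (B h) r) := by
  have ⟨exists_bag, exists_bag_of_adj, _⟩ := hdec
  refine ⟨fun v => ?_, fun u v huv => ?_, fun v => ?_⟩
  · obtain ⟨h, hv⟩ := exists_bag v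
    exact ⟨h, subset_ballSet _ r hv⟩
  · obtain ⟨h, hu, hv⟩ := exists_bag_of_adj huv
    exact ⟨h, subset_ballSet _ r hu, subset_ballSet _ r hv⟩
  · have nodes_eq : {h | v ∈ ballSet G (B h) r} = {h | (B h ∩ G.ball v (r + 1)).Nonempty} :=
      Set.ext fun _ => mem_ballSet_iff_inter_ball_nonempty
    rw [nodes_eq]
    exact hdec.connected_induce_setOf_inter_nonempty (connected_induce_ball v (by simp))

end

/-- Let `(Hg, B)` be a graph-decomposition of `G` and `r : ℕ`. Replacing
every bag `B h` by the ball `B_G(B h, r)` again yields a graph-decomposition of `G`. -/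
theorem decomposition_of_balls_around_bags
    {V N : Type*} [Fintype V] [Fintype N] (G : SimpleGraph V) (Hg : SimpleGraph N)
    (B : N → Set V) (hdec : IsGraphDecomp G Hg B) (r : ℕ) :
    IsGraphDecomp G Hg (fun h => ballSet G (B h) r) :=
  decomposition_of_balls_around_bags_general hdec r

end RadialPaper
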